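/- If d = (d_1,...,d_n) is a non-increasing sequence of positive integers with ∑ d_i = 2n - 2c for a positive integer c, n_1(d) ≤ n_{≥2}(d), and n_1(d) > 0, then there exists a forest F with degree sequence d having exactly n_1(d) support vertices, each adjacent to exactly one vertex of degree 1, and in which all vertices of degree at least 2 that are not support vertices have degree exactly 2 and induce a path of order n - 2·n_1(d). -/

import Mathlib

open SimpleGraph Finset

/-- The degree of a vertex `v` in a simple graph `G`. -/
noncomputable def deg {V : Type*} [Fintype V] (G : SimpleGraph V) (v : V) : ℕ :=
  Nat.card {u // G.Adj v u}

/-- The degree sequence of `G` as a multiset. -/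
noncomputable def degSeq {V : Type*} [Fintype V] (G : SimpleGraph V) : Multiset ℕ :=
  Finset.univ.val.map (deg G)

/-- `D` is a dominating set of `G`. -/
def IsDomSet {V : Type*} (G : SimpleGraph V) (D : Set V) : Prop :=
  ∀ v ∉ D, ∃ u ∈ D, G.Adj u v

/-- The domination number of `G`. -/
noncomputable def domNum {V : Type*} [Fintype V] (G : SimpleGraph V) : ℕ :=
  sInf {k | ∃ D : Set V, IsDomSet G D ∧ D.ncard = k}

/-- `I` is an independent set of `G`. -/
def IsIndepSet' {V : Type*} (G : SimpleGraph V) (I : Set V) : Prop :=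
  ∀ u ∈ I, ∀ v ∈ I, ¬ G.Adj u v

/-- The independence number of `G`. -/
noncomputable def indepNum {V : Type*} [Fintype V] (G : SimpleGraph V) : ℕ :=
  sSup {k | ∃ I : Set V, IsIndepSet' G I ∧ I.ncard = k}

/-- `v` is a support vertex of `G`: degree at least 2 with a neighbor of degree 1. -/
noncomputable def IsSupport {V : Type*} [Fintype V] (G : SimpleGraph V) (v : V) : Prop :=
  2 ≤ deg G v ∧ ∃ u, G.Adj v u ∧ deg G u = 1

section ForestConstruction

variable {V : Type*}

theorem SimpleGraph.not_reachable_of_forall_not_adj {G : SimpleGraph V} {u v : V} (huv : v ≠ u)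
    (hu : ∀ w, ¬ G.Adj u w) : ¬ G.Reachable v u := by
  rintro ⟨p⟩
  cases p.reverse with
  | nil => exact huv rfl
  | cons h _ => exact hu _ h

/-- Attaching an isolated vertex by one edge preserves acyclicity. -/
theorem SimpleGraph.IsAcyclic.sup_edge_isolated {G : SimpleGraph V} (hG : G.IsAcyclic) {u v : V}
    (huv : v ≠ u) (hu : ∀ w, ¬ G.Adj u w) : (G ⊔ edge v u).IsAcyclic :=
  hG.sup_edge_of_not_reachable (not_reachable_of_forall_not_adj huv hu)

/-- The path through the distinct vertices `q 0, …, q M` is acyclic. -/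
theorem exists_isAcyclic_path (q : ℕ → V) (M : ℕ)
    (hq : ∀ i ≤ M, ∀ j ≤ M, q i = q j → i = j) :
    ∃ G : SimpleGraph V, G.IsAcyclic ∧ ∀ a b, G.Adj a b ↔
      ∃ i < M, (a = q i ∧ b = q (i + 1)) ∨ (a = q (i + 1) ∧ b = q i) := by
  induction M with
  | zero => exact ⟨⊥, isAcyclic_bot, by simp⟩
  | succ M ih =>
    obtain ⟨G, hG, hadj⟩ := ih fun i hi j hj => hq i (by omega) j (by omega)
    have hne : q M ≠ q (M + 1) := fun h => by
      have := hq M (by omega) (M + 1) le_rfl h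
      omega
    refine ⟨G ⊔ edge (q M) (q (M + 1)), hG.sup_edge_isolated hne ?_, ?_⟩
    · intro w hw
      obtain ⟨i, hi, ⟨h, -⟩ | ⟨h, -⟩⟩ := (hadj _ _).1 hw
      · have := hq _ le_rfl _ (by omega) h
        omega
      · have := hq _ le_rfl _ (by omega) h
        omega
    · intro a b
      simp only [sup_adj, edge_adj, hadj, Order.lt_add_one_iff]
      constructor
      · rintro (⟨i, hi, h⟩ | ⟨h, -⟩)
        · exact ⟨i, hi.le, h⟩
        · exact ⟨M, le_rfl, by tauto⟩
      · rintro ⟨i, hi, h⟩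
        rcases hi.lt_or_eq with hi | rfl
        · exact Or.inl ⟨i, hi, h⟩
        · right
          grind

variable [Fintype V]

theorem deg_eq_ncard (G : SimpleGraph V) (v : V) : deg G v = {u | G.Adj v u}.ncard := rfl

theorem deg_eq_zero {G : SimpleGraph V} {v : V} (hv : ∀ w, ¬ G.Adj v w) : deg G v = 0 := by
  simp [deg_eq_ncard, hv]

theorem deg_sup_edge_of_ne {G : SimpleGraph V} {u v w : V} (hv : w ≠ v) (hu : w ≠ u) :
    deg (G ⊔ edge v u) w = deg G w := by
  simp [deg_eq_ncard, edge_adj, hv, hu]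

theorem deg_sup_edge_left {G : SimpleGraph V} {u v : V} (huv : v ≠ u) (h : ¬ G.Adj v u) :
    deg (G ⊔ edge v u) v = deg G v + 1 := by
  have : {w | (G ⊔ edge v u).Adj v w} = insert u {w | G.Adj v w} := by
    ext w
    simp only [sup_adj, edge_adj, Set.mem_ofPred_eq, Set.mem_insert_iff]
    grind
  rw [deg_eq_ncard, this, deg_eq_ncard]
  exact Set.ncard_insert_of_notMem h (Set.toFinite _)

theorem deg_sup_edge_right {G : SimpleGraph V} {u v : V} (huv : v ≠ u) (h : ¬ G.Adj v u) :
    deg (G ⊔ edge v u) u = deg G u + 1 := by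
  rw [edge_comm]
  exact deg_sup_edge_left huv.symm fun h' => h h'.symm

/-- A path with end vertices `u`, `v` and interior vertices `p 0, …, p (m - 1)`. -/
theorem exists_isAcyclic_path_between (p : ℕ → V) (m : ℕ)
    (hp : ∀ i < m, ∀ j < m, p i = p j → i = j) (u v : V) (huv : u ≠ v)
    (hpu : ∀ i < m, p i ≠ u) (hpv : ∀ i < m, p i ≠ v) :
    ∃ G : SimpleGraph V, G.IsAcyclic ∧
      (∀ a b, G.Adj a b → a = u ∨ a = v ∨ ∃ j < m, a = p j) ∧
      deg G u = 1 ∧ deg G v = 1 ∧ (∀ j < m, deg G (p j) = 2) ∧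
      ∀ i < m, ∀ j < m, (G.Adj (p i) (p j) ↔ i + 1 = j ∨ j + 1 = i) := by
  classical
  let q : ℕ → V := fun i => if i = 0 then u else if i = m + 1 then v else p (i - 1)
  have q_zero : q 0 = u := rfl
  have q_last : q (m + 1) = v := by simp [q]
  have q_mid : ∀ j < m, q (j + 1) = p j := fun j hj => by simp [q, hj.ne]
  have hq : ∀ i ≤ m + 1, ∀ j ≤ m + 1, q i = q j → i = j := by
    intro i hi j hj h
    simp only [q] at h
    split_ifs at h with h1 h2 h3 h4 h5 h6 h7
    all_goals first
      | omega
      | exact absurd h huv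
      | exact absurd h.symm huv
      | exact absurd h (hpu _ (by omega))
      | exact absurd h.symm (hpu _ (by omega))
      | exact absurd h (hpv _ (by omega))
      | exact absurd h.symm (hpv _ (by omega))
      | (have := hp _ (by omega) _ (by omega) h; omega)
  obtain ⟨G, hG, hadj⟩ := exists_isAcyclic_path q (m + 1) hq
  have adj_q : ∀ i ≤ m + 1, ∀ b, G.Adj (q i) b ↔
      (i ≤ m ∧ b = q (i + 1)) ∨ (1 ≤ i ∧ b = q (i - 1)) := by
    intro i hi b
    rw [hadj]
    constructor
    · rintro ⟨j, hj, ⟨h, rfl⟩ | ⟨h, rfl⟩⟩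
      · obtain rfl := hq _ hi _ (by omega) h
        exact Or.inl ⟨by omega, rfl⟩
      · obtain rfl := hq _ hi _ (by omega) h
        exact Or.inr ⟨by omega, by simp⟩
    · rintro (⟨h, rfl⟩ | ⟨h, rfl⟩)
      · exact ⟨i, by omega, Or.inl ⟨rfl, rfl⟩⟩
      · exact ⟨i - 1, by omega, Or.inr ⟨by rw [Nat.sub_add_cancel h], rfl⟩⟩
  refine ⟨G, hG, ?_, ?_, ?_, ?_, ?_⟩
  · intro a b hab
    have key : ∃ i ≤ m + 1, a = q i := by
      obtain ⟨i, hi, ⟨h, -⟩ | ⟨h, -⟩⟩ := (hadj _ _).1 hab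
      · exact ⟨i, by omega, h⟩
      · exact ⟨i + 1, by omega, h⟩
    obtain ⟨i, hi, rfl⟩ := key
    rcases i with _ | i
    · exact Or.inl q_zero
    · rcases (Nat.le_of_succ_le_succ hi).lt_or_eq with h | rfl
      · exact Or.inr (Or.inr ⟨i, h, q_mid i h⟩)
      · exact Or.inr (Or.inl q_last)
  · rw [deg_eq_ncard, Set.ncard_eq_one]
    refine ⟨q 1, Set.ext fun b => ?_⟩
    simpa [q_zero] using adj_q 0 (by omega) b
  · rw [deg_eq_ncard, Set.ncard_eq_one]
    refine ⟨q m, Set.ext fun b => ?_⟩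
    simpa [q_last] using adj_q (m + 1) le_rfl b
  · intro j hj
    rw [deg_eq_ncard, Set.ncard_eq_two]
    refine ⟨q (j + 2), q j, fun h => ?_, Set.ext fun b => ?_⟩
    · have := hq _ (by omega) _ (by omega) h
      omega
    · have := adj_q (j + 1) (by omega) b
      rw [q_mid j hj] at this
      simpa [show j + 1 ≤ m from hj] using this
  · intro i hi j hj
    rw [← q_mid i hi, ← q_mid j hj, adj_q (i + 1) (by omega)]
    constructor
    · rintro (⟨-, h⟩ | ⟨-, h⟩)
      · have := hq _ (by omega) _ (by omega) h
        omega
      · have := hq _ (by omega) _ (by omega) h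
        omega
    · rintro (rfl | rfl)
      · exact Or.inl ⟨by omega, rfl⟩
      · exact Or.inr ⟨by omega, by simp⟩

/-- A forest on `s` together with the vertices `p 0, …, p (m - 1)`, with prescribed degrees `e` on
`s`, in which the `p j` have degree two and induce a path. -/
theorem exists_forest_subdivided [DecidableEq V] (p : ℕ → V) (m : ℕ)
    (hp : ∀ i < m, ∀ j < m, p i = p j → i = j) (k : ℕ) :
    ∀ (c : ℕ) (s : Finset V) (e : V → ℕ), s.card = k → 0 < c → s.Nonempty →
      (∀ v ∈ s, 1 ≤ e v) →
      (∀ j < m, p j ∉ s) → ∑ v ∈ s, e v + 2 * c = 2 * s.card →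
      ∃ G : SimpleGraph V, G.IsAcyclic ∧
        (∀ a b, G.Adj a b → a ∈ s ∨ ∃ j < m, a = p j) ∧
        (∀ v ∈ s, deg G v = e v) ∧ (∀ j < m, deg G (p j) = 2) ∧
        ∀ i < m, ∀ j < m, (G.Adj (p i) (p j) ↔ i + 1 = j ∨ j + 1 = i) := by
  induction k using Nat.strong_induction_on with
  | _ k ih =>
  intro c s e hk hc hs he hps hsum
  by_cases hone : ∀ v ∈ s, e v = 1
  · have hcard : s.card = 2 * c := by
      rw [Finset.sum_congr rfl hone] at hsum
      simp at hsum
      omega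
    obtain ⟨u, hu, v, hv, huv⟩ := Finset.one_lt_card.1 (show 1 < s.card by omega)
    by_cases hc1 : c = 1
    · have hs2 : s = {u, v} := by
        symm
        apply Finset.eq_of_subset_of_card_le
        · grind
        · rw [Finset.card_pair huv]; omega
      obtain ⟨G, hG, hsupp, h1, h2, h3, h4⟩ := exists_isAcyclic_path_between p m hp u v huv
        (fun i hi h => hps i hi (h ▸ hu)) (fun i hi h => hps i hi (h ▸ hv))
      refine ⟨G, hG, fun a b hab => ?_, fun w hw => ?_, h3, h4⟩
      · rcases hsupp a b hab with rfl | rfl | h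
        · exact Or.inl hu
        · exact Or.inl hv
        · exact Or.inr h
      · rw [hone w hw]
        rw [hs2] at hw
        grind
    · have hvu : v ∈ s.erase u := Finset.mem_erase.2 ⟨huv.symm, hv⟩
      have hcard' : ((s.erase u).erase v).card = 2 * (c - 1) := by
        rw [Finset.card_erase_of_mem hvu, Finset.card_erase_of_mem hu]
        omega
      obtain ⟨G, hG, hsupp, h1, h2, h3⟩ := ih (2 * (c - 1)) (by omega) (c - 1)
        ((s.erase u).erase v) e hcard' (by omega) (Finset.card_pos.1 (by omega))
        (fun w hw => he w (Finset.mem_of_mem_erase (Finset.mem_of_mem_erase hw)))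
        (fun j hj h => hps j hj (Finset.mem_of_mem_erase (Finset.mem_of_mem_erase h)))
        (by
          rw [Finset.sum_congr rfl fun w hw =>
            hone w (Finset.mem_of_mem_erase (Finset.mem_of_mem_erase hw))]
          simp only [Finset.sum_const, smul_eq_mul]
          omega)
      have hu0 : ∀ w, ¬ G.Adj u w := fun w hw => by
        rcases hsupp _ _ hw with h | ⟨j, hj, rfl⟩
        · simp at h
        · exact hps j hj hu
      have hv0 : ∀ w, ¬ G.Adj v w := fun w hw => by
        rcases hsupp _ _ hw with h | ⟨j, hj, rfl⟩
        · simp at h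
        · exact hps j hj hv
      refine ⟨G ⊔ edge v u, hG.sup_edge_isolated huv.symm hu0, ?_, ?_, ?_, ?_⟩
      · intro a b hab
        rcases hab with hab | hab
        · rcases hsupp _ _ hab with h | h
          · exact Or.inl (Finset.mem_of_mem_erase (Finset.mem_of_mem_erase h))
          · exact Or.inr h
        · rw [edge_adj] at hab
          left
          grind
      · intro w hw
        by_cases hwv : w = v
        · subst hwv
          rw [deg_sup_edge_left huv.symm (hv0 _), deg_eq_zero hv0, hone w hw]
        by_cases hwu : w = u
        · subst hwu
          rw [deg_sup_edge_right huv.symm (hv0 _), deg_eq_zero hu0, hone w hw]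
        rw [deg_sup_edge_of_ne hwv hwu]
        exact h1 w (by simp [hwv, hwu, hw])
      · intro j hj
        rw [deg_sup_edge_of_ne (ne_of_mem_of_not_mem hv (hps j hj)).symm
          (ne_of_mem_of_not_mem hu (hps j hj)).symm, h2 j hj]
      · intro i hi j hj
        rw [← h3 i hi j hj, sup_adj, edge_adj]
        grind
  · push Not at hone
    obtain ⟨v, hv, hv1⟩ := hone
    have hv2 : 2 ≤ e v := by have := he v hv; omega
    obtain ⟨u, hu, hu1⟩ : ∃ u ∈ s, e u = 1 := by
      by_contra! hcon
      have : ∑ _w ∈ s, 2 ≤ ∑ w ∈ s, e w := Finset.sum_le_sum fun w hw => by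
        have := he w hw
        have := hcon w hw
        omega
      simp at this
      omega
    have huv : v ≠ u := fun h => hv1 (h ▸ hu1)
    have hvu : v ∈ s.erase u := Finset.mem_erase.2 ⟨huv, hv⟩
    have hpos : 0 < s.card := Finset.card_pos.2 hs
    have hcard' : (s.erase u).card = s.card - 1 := Finset.card_erase_of_mem hu
    obtain ⟨G, hG, hsupp, h1, h2, h3⟩ := ih (k - 1) (by omega) c
      (s.erase u) (Function.update e v (e v - 1)) (by omega) hc ⟨v, hvu⟩
      (fun w hw => by
        have := he w (Finset.mem_of_mem_erase hw)
        by_cases h : w = v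
        · subst h; simp; omega
        · simpa [h] using this)
      (fun j hj h => hps j hj (Finset.mem_of_mem_erase h))
      (by
        rw [Finset.sum_update_of_mem hvu]
        have e1 := Finset.add_sum_erase s e hu
        have e2 := Finset.add_sum_erase (s.erase u) e hvu
        rw [Finset.sdiff_singleton_eq_erase]
        omega)
    have hu0 : ∀ w, ¬ G.Adj u w := fun w hw => by
      rcases hsupp _ _ hw with h | ⟨j, hj, rfl⟩
      · simp at h
      · exact hps j hj hu
    have hvu0 : ¬ G.Adj v u := fun h => hu0 _ h.symm
    refine ⟨G ⊔ edge v u, hG.sup_edge_isolated huv hu0, ?_, ?_, ?_, ?_⟩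
    · intro a b hab
      rcases hab with hab | hab
      · rcases hsupp _ _ hab with h | h
        · exact Or.inl (Finset.mem_of_mem_erase h)
        · exact Or.inr h
      · rw [edge_adj] at hab
        left
        grind
    · intro w hw
      by_cases hwv : w = v
      · subst hwv
        rw [deg_sup_edge_left huv hvu0, h1 w hvu]
        simp
        omega
      by_cases hwu : w = u
      · subst hwu
        rw [deg_sup_edge_right huv hvu0, deg_eq_zero hu0, hu1]
      rw [deg_sup_edge_of_ne hwv hwu, h1 w (by simp [hwu, hw])]
      simp [hwv]
    · intro j hj
      rw [deg_sup_edge_of_ne (ne_of_mem_of_not_mem hv (hps j hj)).symm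
          (ne_of_mem_of_not_mem hu (hps j hj)).symm, h2 j hj]
    · intro i hi j hj
      rw [← h3 i hi j hj, sup_adj, edge_adj]
      grind

/-- Attach a pendant vertex `l a` to every `a ∈ s`. -/
theorem exists_forest_pendants [DecidableEq V] {G : SimpleGraph V} (hG : G.IsAcyclic)
    (l : V → V) (s : Finset V) (hl : ∀ a ∈ s, ∀ b ∈ s, l a = l b → a = b)
    (hls : ∀ a ∈ s, l a ∉ s) (hiso : ∀ a ∈ s, ∀ b, ¬ G.Adj (l a) b) :
    ∃ H : SimpleGraph V, H.IsAcyclic ∧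
      (∀ a b, H.Adj a b ↔ G.Adj a b ∨ (a ∈ s ∧ b = l a) ∨ (b ∈ s ∧ a = l b)) ∧
      (∀ a ∈ s, deg H a = deg G a + 1) ∧ (∀ a ∈ s, deg H (l a) = 1) ∧
      ∀ a ∉ s, (∀ b ∈ s, a ≠ l b) → deg H a = deg G a := by
  suffices h : ∀ t ⊆ s, ∃ H : SimpleGraph V, H.IsAcyclic ∧
      (∀ a b, H.Adj a b ↔ G.Adj a b ∨ (a ∈ t ∧ b = l a) ∨ (b ∈ t ∧ a = l b)) ∧
      (∀ a ∈ t, deg H a = deg G a + 1) ∧ (∀ a ∈ t, deg H (l a) = 1) ∧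
      ∀ a ∉ t, (∀ b ∈ t, a ≠ l b) → deg H a = deg G a from h s subset_rfl
  intro t
  induction t using Finset.induction_on with
  | empty => exact fun _ => ⟨G, hG, by simp⟩
  | insert x t hx ih =>
    intro hts
    have hxs : x ∈ s := hts (Finset.mem_insert_self _ _)
    have hts' : t ⊆ s := fun y hy => hts (Finset.mem_insert_of_mem hy)
    obtain ⟨H, hH, hadj, h1, h2, h3⟩ := ih hts'
    have hlx : ∀ a ∈ s, x ≠ l a := fun a ha h => hls a ha (h ▸ hxs)
    have hne : x ≠ l x := hlx x hxs
    have hiso' : ∀ w, ¬ H.Adj (l x) w := by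
      intro w hw
      rcases (hadj _ _).1 hw with h | ⟨h, -⟩ | ⟨h, h'⟩
      · exact hiso x hxs _ h
      · exact hls x hxs (hts' h)
      · exact hx (hl x hxs w (hts' h) h' ▸ h)
    have hxl : ¬ H.Adj x (l x) := fun h => hiso' _ h.symm
    refine ⟨H ⊔ edge x (l x), hH.sup_edge_isolated hne hiso', ?_, ?_, ?_, ?_⟩
    · intro a b
      rw [sup_adj, edge_adj, hadj]
      grind
    · intro a ha
      by_cases hax : a = x
      · subst hax
        rw [deg_sup_edge_left hne hxl, h3 a hx fun b hb => hlx b (hts' hb)]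
      · rw [deg_sup_edge_of_ne hax (ne_of_mem_of_not_mem (hts ha) (hls x hxs))]
        exact h1 a (Finset.mem_of_mem_insert_of_ne ha hax)
    · intro a ha
      by_cases hax : a = x
      · subst hax
        rw [deg_sup_edge_right hne hxl, deg_eq_zero hiso']
      · rw [deg_sup_edge_of_ne (hlx a (hts ha)).symm fun h => hax (hl a (hts ha) x hxs h)]
        exact h2 a (Finset.mem_of_mem_insert_of_ne ha hax)
    · intro a ha hal
      rw [deg_sup_edge_of_ne (ne_of_mem_of_not_mem (Finset.mem_insert_self x t) ha).symm
        (hal x (Finset.mem_insert_self _ _))]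
      exact h3 a (fun h => ha (Finset.mem_insert_of_mem h))
        fun b hb => hal b (Finset.mem_insert_of_mem hb)

end ForestConstruction

theorem Fin.iff_sub_card_le_of_upward {n : ℕ} (P : Fin n → Prop) [DecidablePred P]
    (hP : ∀ i j, i ≤ j → P i → P j) (i : Fin n) :
    P i ↔ n - (Finset.univ.filter P).card ≤ i := by
  constructor
  · intro hi
    have : (Finset.Ici i).card ≤ (Finset.univ.filter P).card :=
      Finset.card_le_card fun j hj => by simpa using hP i j (Finset.mem_Ici.1 hj) hi
    rw [Fin.card_Ici] at this
    omega
  · intro hi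
    by_contra hcon
    have : (Finset.univ.filter P).card ≤ (Finset.Ioi i).card :=
      Finset.card_le_card fun j hj => by
        rw [Finset.mem_Ioi]
        by_contra hji
        exact hcon (hP j i (not_lt.1 hji) (Finset.mem_filter.1 hj).2)
    rw [Fin.card_Ioi] at this
    omega

theorem Fin.sum_ite_val_lt_one {n k : ℕ} (hk : k ≤ n) :
    ∑ i : Fin n, (if (i : ℕ) < k then 1 else 0) = k := by
  rw [← Finset.card_filter, Fin.card_filter_val_lt, min_eq_right hk]

theorem stmt_7 (n c : ℕ) (hc : 0 < c) (d : Fin n → ℕ) (hmono : Antitone d)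
    (hpos : ∀ i, 0 < d i) (hsum : ∑ i, d i = 2 * n - 2 * c)
    (h12 : (Finset.univ.filter fun i => d i = 1).card ≤ (Finset.univ.filter fun i => 2 ≤ d i).card)
    (h1 : 0 < (Finset.univ.filter fun i => d i = 1).card) :
    ∃ G : SimpleGraph (Fin n), G.IsAcyclic ∧
      degSeq G = Finset.univ.val.map d ∧
      {v | IsSupport G v}.ncard = (Finset.univ.filter fun i => d i = 1).card ∧
      (∀ v, IsSupport G v → {u | G.Adj v u ∧ deg G u = 1}.ncard = 1) ∧
      (∀ v, 2 ≤ deg G v → ¬ IsSupport G v → deg G v = 2) ∧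
      Nonempty ((G.induce {v | 2 ≤ deg G v ∧ ¬ IsSupport G v}) ≃g
        pathGraph (n - 2 * (Finset.univ.filter fun i => d i = 1).card)) := by
  have hcard : (Finset.univ.filter fun i => d i = 1).card +
      (Finset.univ.filter fun i => 2 ≤ d i).card = n := by
    have := Finset.card_filter_add_card_filter_not (s := (Finset.univ : Finset (Fin n)))
      (fun i => d i = 1)
    rw [Finset.card_univ, Fintype.card_fin] at this
    convert this using 3
    ext i
    have := hpos i
    simp
    omega
  have hleaf := Fin.iff_sub_card_le_of_upward (fun i => d i = 1) fun i j hij hi => by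
    have := hmono hij
    have := hpos j
    omega
  generalize (Finset.univ.filter fun i => d i = 1).card = k at *
  have hkn : 2 * k ≤ n := by omega
  have htwo : ∀ i : Fin n, (i : ℕ) < n - k → 2 ≤ d i := fun i hi => by
    have := hpos i
    have : d i ≠ 1 := fun h => by have := (hleaf i).1 h; omega
    omega
  have hn_le : n ≤ ∑ i, d i := by
    have : ∑ _i : Fin n, 1 ≤ ∑ i, d i := Finset.sum_le_sum fun i _ => hpos i
    simpa using this
  have hmid : ∀ i : Fin n, k ≤ (i : ℕ) → (i : ℕ) < n - k → d i = 2 := by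
    intro i hki hi
    by_contra hne
    have h3 : 3 ≤ d i := by have := htwo i hi; omega
    have hle : ∑ j : Fin n, (1 + (if (j : ℕ) < n - k then 1 else 0) +
        (if (j : ℕ) < i + 1 then 1 else 0)) ≤ ∑ j, d j := by
      refine Finset.sum_le_sum fun j _ => ?_
      have h1 := hpos j
      have h2 := htwo j
      have h3' : (j : ℕ) < i + 1 → d i ≤ d j := fun h => hmono (Fin.le_def.2 (by omega))
      split_ifs <;> omega
    rw [Finset.sum_add_distrib, Finset.sum_add_distrib, Fin.sum_ite_val_lt_one (by omega),
      Fin.sum_ite_val_lt_one (by omega)] at hle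
    simp at hle
    omega
  let s : Finset (Fin n) := Finset.univ.filter fun i => (i : ℕ) < k
  have mem_s : ∀ i, i ∈ s ↔ (i : ℕ) < k := fun i => by simp [s]
  have hs : s.card = k := by
    rw [Fin.card_filter_val_lt, min_eq_right (by omega)]
  have hsum_s : ∑ v ∈ s, (d v - 1) + 2 * c = 2 * s.card := by
    have h : ∑ i : Fin n, (d i + if (i : ℕ) < k then 1 else 0) =
        ∑ i : Fin n, ((if (i : ℕ) < k then d i - 1 else 0) + 1 +
          if (i : ℕ) < n - k then 1 else 0) := by
      refine Finset.sum_congr rfl fun i _ => ?_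
      have h1 := htwo i
      have h2 := hmid i
      have h3 := (hleaf i).2
      split_ifs <;> omega
    rw [Finset.sum_add_distrib, Finset.sum_add_distrib, Finset.sum_add_distrib,
      Fin.sum_ite_val_lt_one (by omega), Fin.sum_ite_val_lt_one (by omega),
      ← Finset.sum_filter] at h
    simp only [Finset.sum_const, Finset.card_univ, Fintype.card_fin, smul_eq_mul, mul_one] at h
    rw [hs]
    change _ = (∑ v ∈ s, (d v - 1)) + n + _ at h
    omega
  have hn : 0 < n := by omega
  have : NeZero n := ⟨hn.ne'⟩
  let p : ℕ → Fin n := fun j => Fin.ofNat n (k + j)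
  let l : Fin n → Fin n := fun i => Fin.ofNat n (n - k + i)
  have p_val : ∀ j < n - 2 * k, (p j : ℕ) = k + j := fun j hj => Nat.mod_eq_of_lt (by omega)
  have l_val : ∀ i ∈ s, (l i : ℕ) = n - k + i := fun i hi =>
    Nat.mod_eq_of_lt (by have := (mem_s i).1 hi; omega)
  obtain ⟨G, hG, hsupp, hGs, hGp, hpath⟩ := exists_forest_subdivided p (n - 2 * k)
    (fun i hi j hj h => by
      have := congrArg Fin.val h
      rw [p_val i hi, p_val j hj] at this
      omega)
    k c s (fun v => d v - 1) hs hc (Finset.card_pos.1 (by omega))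
    (fun v hv => by
      have := htwo v (by have := (mem_s v).1 hv; omega)
      omega)
    (fun j hj h => by
      rw [mem_s, p_val j hj] at h
      omega)
    hsum_s
  have hsupp' : ∀ a b, G.Adj a b → (a : ℕ) < n - k := by
    intro a b hab
    rcases hsupp a b hab with h | ⟨j, hj, rfl⟩
    · have := (mem_s a).1 h
      omega
    · rw [p_val j hj]
      omega
  obtain ⟨H, hH, hadj, hHs, hHl, hHG⟩ := exists_forest_pendants hG l s
    (fun a ha b hb h => by
      have := congrArg Fin.val h
      rw [l_val a ha, l_val b hb] at this
      exact Fin.ext (by omega))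
    (fun a ha h => by
      rw [mem_s, l_val a ha] at h
      omega)
    (fun a ha b h => by
      have := hsupp' _ _ h
      rw [l_val a ha] at this
      omega)
  have hmid_eq : ∀ v : Fin n, k ≤ (v : ℕ) → (v : ℕ) < n - k → v = p (v - k) :=
    fun v h1 h2 => Fin.ext (by rw [p_val _ (by omega)]; omega)
  have hdeg : ∀ v, deg H v = d v := by
    intro v
    by_cases hv : (v : ℕ) < k
    · have h2 := htwo v (by omega)
      rw [hHs v ((mem_s v).2 hv), hGs v ((mem_s v).2 hv)]
      omega
    by_cases hv' : (v : ℕ) < n - k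
    · rw [hHG v (by rwa [mem_s]) fun b hb h => ?_, hmid v (by omega) hv',
        hmid_eq v (by omega) hv', hGp _ (by omega)]
      have := congrArg Fin.val h
      rw [l_val b hb] at this
      omega
    · rw [(hleaf v).2 (by omega)]
      have hw : Fin.ofNat n (v - (n - k)) ∈ s := by
        rw [mem_s, Fin.val_ofNat, Nat.mod_eq_of_lt (by omega)]
        omega
      have hvw : v = l (Fin.ofNat n (v - (n - k))) := Fin.ext (by
        rw [l_val _ hw, Fin.val_ofNat, Nat.mod_eq_of_lt (by omega)]
        omega)
      rw [hvw]
      exact hHl _ hw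
  have leaf_adj : ∀ v u, (H.Adj v u ∧ deg H u = 1) ↔ v ∈ s ∧ u = l v := by
    intro v u
    rw [hdeg, hleaf, hadj]
    constructor
    · rintro ⟨h | h | ⟨h, -⟩, hu⟩
      · have := hsupp' _ _ h.symm
        omega
      · exact h
      · have := (mem_s u).1 h
        omega
    · rintro ⟨hv, rfl⟩
      refine ⟨Or.inr (Or.inl ⟨hv, rfl⟩), ?_⟩
      rw [l_val v hv]
      omega
  have hsupport : ∀ v, IsSupport H v ↔ (v : ℕ) < k := by
    intro v
    simp only [IsSupport, leaf_adj, ← mem_s]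
    refine ⟨fun ⟨_, _, h, _⟩ => h, fun h => ⟨?_, l v, h, rfl⟩⟩
    rw [hdeg]
    exact htwo v (by have := (mem_s v).1 h; omega)
  have hset : ∀ v, (2 ≤ deg H v ∧ ¬ IsSupport H v) ↔ k ≤ (v : ℕ) ∧ (v : ℕ) < n - k := by
    intro v
    rw [hsupport, hdeg]
    have h1 := htwo v
    have h2 := (hleaf v).2
    omega
  refine ⟨H, hH, by rw [degSeq, funext hdeg], ?_, ?_, ?_, ?_⟩
  · have : {v | IsSupport H v} = (s : Set (Fin n)) := by
      ext v
      simp [hsupport, mem_s]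
    rw [this, Set.ncard_coe_finset, hs]
  · intro v hv
    rw [hsupport, ← mem_s] at hv
    simp [leaf_adj, hv]
  · intro v h2 hv
    obtain ⟨h, h'⟩ := (hset v).1 ⟨h2, hv⟩
    rw [hdeg, hmid v h h']
  · refine ⟨⟨⟨fun v => ⟨v.1 - k, ?_⟩, fun j => ⟨p j, ?_⟩, fun v => ?_, fun j => ?_⟩, ?_⟩⟩
    · have := (hset v.1).1 v.2
      omega
    · refine (hset _).2 ?_
      rw [p_val j j.2]
      omega
    · have := (hset v.1).1 v.2
      exact Subtype.ext (hmid_eq v.1 this.1 this.2).symm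
    · refine Fin.ext ?_
      simp [p_val j j.2]
    · intro v w
      have hv := (hset v.1).1 v.2
      have hw := (hset w.1).1 w.2
      simp only [Equiv.coe_fn_mk, pathGraph_adj, comap_adj, Function.Embedding.subtype_apply]
      rw [← hpath _ (by omega) _ (by omega), ← hmid_eq v.1 hv.1 hv.2, ← hmid_eq w.1 hw.1 hw.2,
        hadj, mem_s, mem_s]
      constructor
      · exact Or.inl
      · rintro (h | ⟨h, -⟩ | ⟨h, -⟩)
        · exact h
        · omega
        · omega
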